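/- Let m ≥ 4 and n ≥ 5. Every strategyproof SDS that is anonymous, neutral, α-Condorcet-consistent, and β-ex post efficient with β = ((m−2)/(m−1))·α is a convex combination of the uniform random dictatorship and the randomized Copeland rule. -/

import Mathlib

open Finset

noncomputable section

/-- A preference profile: each voter's strict linear order on the `m`
alternatives is encoded as a ranking permutation, where `R i x` is the rank of
alternative `x` for voter `i` (rank `0` = most preferred). Voter `i` strictly
prefers `x` to `y` iff `R i x < R i y`. -/
abbrev Profile (n m : ℕ) := Fin n → Equiv.Perm (Fin m)

/-- `F R x` is the probability that the social decision scheme `F` assigns to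
alternative `x` at profile `R`; `IsSDS F` says every `F R` is a lottery. -/
def IsSDS {n m : ℕ} (F : Profile n m → Fin m → ℝ) : Prop :=
  (∀ R x, 0 ≤ F R x) ∧ ∀ R, ∑ x, F R x = 1

/-- Stochastic-dominance preference of voter `i` (with preferences as in `R`):
lottery `p` is weakly preferred to lottery `q`. -/
def SDPref {n m : ℕ} (R : Profile n m) (i : Fin n) (p q : Fin m → ℝ) : Prop :=
  ∀ x : Fin m,
    ∑ y ∈ univ.filter (fun y => R i y < R i x), q y ≤
      ∑ y ∈ univ.filter (fun y => R i y < R i x), p y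

/-- Strategyproofness: the truthful outcome is SD-preferred to any outcome
obtainable by a unilateral deviation. -/
def Strategyproof {n m : ℕ} (F : Profile n m → Fin m → ℝ) : Prop :=
  ∀ (R R' : Profile n m) (i : Fin n),
    (∀ j, j ≠ i → R j = R' j) → SDPref R i (F R) (F R')

/-- Anonymity: permuting the voters does not change the outcome. -/
def Anonymous {n m : ℕ} (F : Profile n m → Fin m → ℝ) : Prop :=
  ∀ (π : Equiv.Perm (Fin n)) (R : Profile n m), F (fun i => R (π i)) = F R

/-- The profile obtained from `R` by relabeling the alternatives by `τ`
(in `relabel τ R`, alternative `τ x` gets the rank that `x` has in `R`). -/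
def relabel {n m : ℕ} (τ : Equiv.Perm (Fin m)) (R : Profile n m) : Profile n m :=
  fun i => τ.symm.trans (R i)

/-- Neutrality: relabeling the alternatives permutes the outcome accordingly. -/
def Neutral {n m : ℕ} (F : Profile n m → Fin m → ℝ) : Prop :=
  ∀ (τ : Equiv.Perm (Fin m)) (R : Profile n m) (x : Fin m),
    F (relabel τ R) (τ x) = F R x

/-- The supporting size `n_{xy}(R)`: the number of voters preferring `x` to `y`. -/
def suppSize {n m : ℕ} (R : Profile n m) (x y : Fin m) : ℕ :=
  (univ.filter (fun i => R i x < R i y)).card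

/-- `x` is the Condorcet winner of `R`. -/
def CondorcetWinner {n m : ℕ} (R : Profile n m) (x : Fin m) : Prop :=
  ∀ y, y ≠ x → suppSize R y x < suppSize R x y

/-- `α`-Condorcet-consistency. -/
def CondorcetConsistent {n m : ℕ} (F : Profile n m → Fin m → ℝ) (α : ℝ) : Prop :=
  ∀ R x, CondorcetWinner R x → α ≤ F R x

/-- `x` is Pareto-dominated in `R`. -/
def ParetoDominated {n m : ℕ} (R : Profile n m) (x : Fin m) : Prop :=
  ∃ y, ∀ i, R i y < R i x

/-- `β`-ex post efficiency. -/
def ExPostEff {n m : ℕ} (F : Profile n m → Fin m → ℝ) (β : ℝ) : Prop :=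
  ∀ R x, ParetoDominated R x → F R x ≤ β

/-- The probability that the dictatorial SDS of voter `i` assigns to `x`:
`1` if `x` is voter `i`'s most preferred alternative and `0` otherwise. -/
def dictProb {n m : ℕ} (R : Profile n m) (i : Fin n) (x : Fin m) : ℝ :=
  if ∀ y, R i x ≤ R i y then 1 else 0

/-- `d` is a random dictatorship. -/
def IsRandDict {n m : ℕ} (d : Profile n m → Fin m → ℝ) : Prop :=
  ∃ δ : Fin n → ℝ, (∀ i, 0 ≤ δ i) ∧ ∑ i, δ i = 1 ∧
    ∀ R x, d R x = ∑ i, δ i * dictProb R i x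

/-- `F` can be written as `γ d + (1 - γ) g` with `d` a random dictatorship and
`g` a strategyproof SDS. -/
def DecomposesAt {n m : ℕ} (F : Profile n m → Fin m → ℝ) (γ : ℝ) : Prop :=
  ∃ d g : Profile n m → Fin m → ℝ, IsRandDict d ∧ IsSDS g ∧ Strategyproof g ∧
    ∀ R x, F R x = γ * d R x + (1 - γ) * g R x

/-- `F` is `γ`-randomly dictatorial: `γ ∈ [0,1]` is the maximal value admitting
a decomposition `F = γ d + (1 - γ) g` as above. -/
def RandDictDegree {n m : ℕ} (F : Profile n m → Fin m → ℝ) (γ : ℝ) : Prop :=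
  0 ≤ γ ∧ γ ≤ 1 ∧ DecomposesAt F γ ∧
    ∀ γ', 0 ≤ γ' → γ' ≤ 1 → DecomposesAt F γ' → γ' ≤ γ

/-- The profile `R^{i:yx}` obtained from `R` by swapping `x` and `y` in voter
`i`'s preference relation (used when `x` is ranked directly above `y`). -/
def swapTop {n m : ℕ} (R : Profile n m) (i : Fin n) (x y : Fin m) : Profile n m :=
  Function.update R i ((R i).trans (Equiv.swap (R i x) (R i y)))

/-- The weight vector `b` defining the randomized Copeland rule:
`b k = 2/(m(m-1))` for `k > n/2`, `b k = 1/(m(m-1))` for `k = n/2`, `b k = 0`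
for `k < n/2`. -/
def copelandWeight (n m : ℕ) (k : ℕ) : ℝ :=
  if n < 2 * k then 2 / ((m : ℝ) * ((m : ℝ) - 1))
  else if 2 * k = n then 1 / ((m : ℝ) * ((m : ℝ) - 1))
  else 0

/-- The randomized Copeland rule `f_C(R, x) = ∑_{y ≠ x} b_{n_{xy}(R)}`. -/
def randCopeland (n m : ℕ) : Profile n m → Fin m → ℝ :=
  fun R x => ∑ y ∈ univ.filter (fun y => y ≠ x), copelandWeight n m (suppSize R x y)

/-- A point voting SDS, given by a scoring vector `a` (indexed by ranks
`0, …, m-1`, i.e. `a k` is the score of the `(k+1)`-st ranked alternative). -/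
structure PointVoting (n m : ℕ) where
  a : ℕ → ℝ
  mono : ∀ k l : ℕ, k ≤ l → l < m → a l ≤ a k
  nonneg : ∀ k : ℕ, k < m → 0 ≤ a k
  sum_eq : ∑ k ∈ Finset.range m, a k = 1 / (n : ℝ)

/-- The value of a point voting SDS. -/
def pvVal {n m : ℕ} (pv : PointVoting n m) : Profile n m → Fin m → ℝ :=
  fun R x => ∑ i, pv.a (R i x : ℕ)

/-- A supporting size SDS, given by a vector `b` indexed by supporting sizes
`0, …, n`. -/
structure SupportingSize (n m : ℕ) where
  b : ℕ → ℝ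
  mono : ∀ k l : ℕ, k ≤ l → l ≤ n → b k ≤ b l
  nonneg : ∀ k : ℕ, k ≤ n → 0 ≤ b k
  pair_eq : ∀ k : ℕ, k ≤ n → b k + b (n - k) = 2 / ((m : ℝ) * ((m : ℝ) - 1))

/-- The value of a supporting size SDS. -/
def ssVal {n m : ℕ} (S : SupportingSize n m) : Profile n m → Fin m → ℝ :=
  fun R x => ∑ y ∈ univ.filter (fun y => y ≠ x), S.b (suppSize R x y)

/-- A duple: a strategyproof SDS that puts positive probability on at most two
fixed alternatives. -/
def IsDuple {n m : ℕ} (g : Profile n m → Fin m → ℝ) : Prop :=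
  IsSDS g ∧ Strategyproof g ∧ ∃ x y : Fin m, ∀ R z, z ≠ x → z ≠ y → g R z = 0

/-- A unilateral: a strategyproof SDS that depends only on the preferences of a
single fixed voter. -/
def IsUnilateral {n m : ℕ} (g : Profile n m → Fin m → ℝ) : Prop :=
  IsSDS g ∧ Strategyproof g ∧
    ∃ i : Fin n, ∀ R R' : Profile n m, R i = R' i → g R = g R'

/-- `F` is a convex combination of SDSs satisfying the property `P`. -/
def MixOf {n m : ℕ} (P : (Profile n m → Fin m → ℝ) → Prop)
    (F : Profile n m → Fin m → ℝ) : Prop :=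
  ∃ (K : ℕ) (w : Fin K → ℝ) (g : Fin K → Profile n m → Fin m → ℝ),
    (∀ k, 0 ≤ w k) ∧ ∑ k, w k = 1 ∧ (∀ k, P (g k)) ∧
    ∀ R x, F R x = ∑ k, w k * g k R x

/-- The uniform random dictatorship. -/
def uniformRD (n m : ℕ) : Profile n m → Fin m → ℝ :=
  fun R x => (1 / (n : ℝ)) * ∑ i, dictProb R i x

/-- The uniform lottery. -/
def uniformLottery (n m : ℕ) : Profile n m → Fin m → ℝ :=
  fun _ _ => 1 / (m : ℝ)


/-!
For a strategyproof scheme, an adjacent swap of `x` and `y` in one voter's ranking only moves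
probability from `x` to `y`, and by anonymity and neutrality the amount depends only on the rank of
`x` and the number of voters preferring `x` to `y`. The two ways of turning `x y z` into `z y x` by
adjacent swaps force this amount to be the sum of a term in the rank and a term in the support.
Hence the scheme is the sum of a positional score with weights `a` and a supporting size score with
weights `b`.

The second alternative of a unanimous profile is Pareto-dominated. On the other hand, if first
places go to `m - 1` alternatives, each of them the favourite of a minority only, then the remaining
alternative can be ranked second by every voter and is the Condorcet winner. Comparing the
two probabilities forces `a 1 = 0` and `b (n / 2 + 1) = b n`: what remains is
the uniform random dictatorship and the Copeland rule.
-/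
section AdjacentSwaps

variable {n m : ℕ} {R : Profile n m} {i j : Fin n} {x y z w u v : Fin m}

/-- Voter `i` ranks `x` immediately above `y`. This is the situation in which `swapTop R i x y`
changes no comparison of voter `i` other than that of `x` and `y`. -/
def DirectlyAbove (R : Profile n m) (i : Fin n) (x y : Fin m) : Prop :=
  (R i y : ℕ) = R i x + 1

theorem DirectlyAbove.lt (h : DirectlyAbove R i x y) : R i x < R i y := by
  rw [Fin.lt_def, h]
  exact Nat.lt_succ_self _

theorem DirectlyAbove.ne (h : DirectlyAbove R i x y) : x ≠ y :=
  fun hxy => h.lt.ne (congrArg (R i) hxy)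

theorem DirectlyAbove.rank_succ_lt (h : DirectlyAbove R i x y) : (R i x : ℕ) + 1 < m :=
  h ▸ (R i y).isLt

theorem DirectlyAbove.congr {T : Profile n m} (h : DirectlyAbove T i x y) (hRT : R i = T i) :
    DirectlyAbove R i x y := by
  rwa [DirectlyAbove, hRT]

theorem swapTop_eq_update (R : Profile n m) (i : Fin n) (x y : Fin m) :
    swapTop R i x y = Function.update R i (R i * Equiv.swap x y) := by
  rw [Equiv.mul_swap_eq_swap_mul]
  rfl

theorem swapTop_self (R : Profile n m) (i : Fin n) (x y : Fin m) :
    swapTop R i x y i = R i * Equiv.swap x y := by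
  rw [swapTop_eq_update, Function.update_self]

theorem swapTop_of_ne (R : Profile n m) (x y : Fin m) (h : j ≠ i) :
    swapTop R i x y j = R j :=
  Function.update_of_ne h _ _

theorem swapTop_apply_left (R : Profile n m) (i : Fin n) (x y : Fin m) :
    swapTop R i x y i x = R i y := by
  simp [swapTop_self]

theorem swapTop_apply_right (R : Profile n m) (i : Fin n) (x y : Fin m) :
    swapTop R i x y i y = R i x := by
  simp [swapTop_self]

theorem swapTop_apply_of_ne_of_ne (R : Profile n m) (i : Fin n) (hx : z ≠ x) (hy : z ≠ y) :
    swapTop R i x y i z = R i z := by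
  simp [swapTop_self, Equiv.swap_apply_of_ne_of_ne hx hy]

theorem swapTop_swapTop (R : Profile n m) (i : Fin n) (x y : Fin m) :
    swapTop (swapTop R i x y) i y x = R := by
  simp [swapTop_eq_update, mul_assoc, Equiv.swap_comm y x]

theorem swapTop_comm (R : Profile n m) (h : j ≠ i) (x y z w : Fin m) :
    swapTop (swapTop R j z w) i x y = swapTop (swapTop R i x y) j z w := by
  simp only [swapTop_eq_update, Function.update_of_ne h, Function.update_of_ne h.symm]
  exact Function.update_comm h _ _ _

theorem swapTop_braid (R : Profile n m) (i : Fin n) (x y z : Fin m) :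
    swapTop (swapTop (swapTop R i x y) i x z) i y z =
      swapTop (swapTop (swapTop R i y z) i x z) i x y := by
  have braid : Equiv.swap x y * Equiv.swap x z * Equiv.swap y z =
      Equiv.swap y z * Equiv.swap x z * Equiv.swap x y := by
    ext u : 1
    simp only [Equiv.Perm.mul_apply, Equiv.swap_apply_def]
    grind
  simpa [swapTop_eq_update, mul_assoc] using congrArg (Function.update R i <| R i * ·) braid

theorem swapTop_comp (R : Profile n m) (π : Equiv.Perm (Fin n)) (i : Fin n) (x y : Fin m) :
    swapTop (fun j => R (π j)) i x y = fun j => swapTop R (π i) x y (π j) := by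
  funext j
  by_cases hj : j = i
  · subst hj
    simp only [swapTop_self]
  · rw [swapTop_of_ne _ _ _ hj, swapTop_of_ne _ _ _ (π.injective.ne hj)]

theorem relabel_apply (τ : Equiv.Perm (Fin m)) (R : Profile n m) (i : Fin n) (x : Fin m) :
    relabel τ R i (τ x) = R i x := by
  simp [relabel]

theorem swapTop_relabel (τ : Equiv.Perm (Fin m)) (R : Profile n m) (i : Fin n) (x y : Fin m) :
    swapTop (relabel τ R) i (τ x) (τ y) = relabel τ (swapTop R i x y) := by
  funext j
  ext z : 1
  obtain ⟨z, rfl⟩ := τ.surjective z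
  by_cases hj : j = i
  · subst hj
    rw [relabel_apply, swapTop_self, swapTop_self, Equiv.Perm.mul_apply, Equiv.Perm.mul_apply,
      ← τ.injective.map_swap, relabel_apply]
  · rw [swapTop_of_ne _ _ _ hj, relabel_apply, relabel_apply, swapTop_of_ne _ _ _ hj]

theorem DirectlyAbove.symm_swapTop (h : DirectlyAbove R i x y) :
    DirectlyAbove (swapTop R i x y) i y x := by
  rwa [DirectlyAbove, swapTop_apply_left, swapTop_apply_right]

theorem DirectlyAbove.ne_of_directlyAbove (hxy : DirectlyAbove R i x y)
    (hyz : DirectlyAbove R i y z) : x ≠ z :=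
  fun hxz => (hxy.lt.trans hyz.lt).ne (congrArg (R i) hxz)

theorem DirectlyAbove.swapTop_top (hxy : DirectlyAbove R i x y) (hyz : DirectlyAbove R i y z) :
    DirectlyAbove (swapTop R i x y) i x z := by
  rwa [DirectlyAbove, swapTop_apply_left,
    swapTop_apply_of_ne_of_ne _ _ (hxy.ne_of_directlyAbove hyz).symm hyz.ne.symm]

theorem DirectlyAbove.swapTop_bottom (hxy : DirectlyAbove R i x y) (hyz : DirectlyAbove R i y z) :
    DirectlyAbove (swapTop R i y z) i x z := by
  rwa [DirectlyAbove, swapTop_apply_right,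
    swapTop_apply_of_ne_of_ne _ _ hxy.ne (hxy.ne_of_directlyAbove hyz)]

theorem swapTop_lt_swapTop_iff (h : DirectlyAbove R i x y) (hxy : ¬(u = x ∧ v = y))
    (hyx : ¬(u = y ∧ v = x)) (j : Fin n) :
    swapTop R i x y j u < swapTop R i x y j v ↔ R j u < R j v := by
  rcases ne_or_eq j i with hj | rfl
  · rw [swapTop_of_ne _ _ _ hj]
  have rank_inj : ∀ a b, (R j a : ℕ) = R j b ↔ a = b := fun a b => by simp [Fin.val_inj]
  simp only [swapTop_self, Equiv.Perm.mul_apply, Equiv.swap_apply_def, Fin.lt_def]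
  unfold DirectlyAbove at h
  grind

/-- The triples `(j, x, y)` such that voter `j` prefers `x` to `y` in `R` but `y` to `x` in `T`;
an adjacent swap that makes `R` more similar to `T` removes exactly one of them. -/
def disagreements (T R : Profile n m) : Finset (Fin n × Fin m × Fin m) :=
  univ.filter fun p => R p.1 p.2.1 < R p.1 p.2.2 ∧ T p.1 p.2.2 < T p.1 p.2.1

theorem disagreements_swapTop_ssubset {T : Profile n m} (h : DirectlyAbove R i x y)
    (hT : T i y < T i x) : disagreements T (swapTop R i x y) ⊂ disagreements T R := by
  refine Finset.ssubset_iff_of_subset ?_ |>.2 ⟨(i, x, y), ?_, ?_⟩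
  · rintro ⟨j, u, v⟩ hp
    simp only [disagreements, mem_filter, mem_univ, true_and] at hp ⊢
    rcases ne_or_eq j i with hj | rfl
    · rwa [swapTop_of_ne _ _ _ hj] at hp
    · refine ⟨(swapTop_lt_swapTop_iff h ?_ ?_ j).1 hp.1, hp.2⟩
      · rintro ⟨rfl, rfl⟩
        rw [swapTop_apply_left, swapTop_apply_right] at hp
        exact hp.1.asymm h.lt
      · rintro ⟨rfl, rfl⟩
        exact hp.2.asymm hT
  · simp [disagreements, h.lt, hT]
  · simp [disagreements, swapTop_apply_left, swapTop_apply_right, h.lt.le]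

theorem exists_adjacent_inversion {σ ρ : Equiv.Perm (Fin m)} (h : σ ≠ ρ) :
    ∃ x y, (σ y : ℕ) = σ x + 1 ∧ ρ y < ρ x := by
  by_contra! hcon
  refine h (Equiv.ext fun x => ?_)
  have strictMono : StrictMono (σ.symm.trans ρ) := by
    obtain _ | m := m
    · exact fun r => r.elim0
    refine Fin.strictMono_iff_lt_succ.2 fun r => lt_of_le_of_ne ?_ ?_
    · exact hcon (σ.symm r.castSucc) (σ.symm r.succ) (by simp)
    · exact (σ.symm.trans ρ).injective.ne r.castSucc_lt_succ.ne
  have eq_id : ⇑(σ.symm.trans ρ) = id := by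
    rw [← strictMono.range_inj strictMono_id, Set.range_id, Equiv.range_eq_univ]
  simpa using (congrFun eq_id (σ x)).symm

@[elab_as_elim]
theorem swapTop_induction (T : Profile n m) {P : Profile n m → Prop} (base : P T)
    (step : ∀ R i x y, DirectlyAbove R i x y → T i y < T i x → P (swapTop R i x y) → P R)
    (R : Profile n m) : P R := by
  by_cases hRT : R = T
  · exact hRT ▸ base
  obtain ⟨i, hi⟩ := Function.ne_iff.1 hRT
  obtain ⟨x, y, hxy, hT⟩ := exists_adjacent_inversion hi
  exact step R i x y hxy hT (swapTop_induction T base step (swapTop R i x y))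
termination_by (disagreements T R).card
decreasing_by exact card_lt_card (disagreements_swapTop_ssubset hxy hT)

end AdjacentSwaps

section SupportingSizes

variable {n m : ℕ} {R : Profile n m} {i : Fin n} {x y u v : Fin m}

theorem suppSize_add_suppSize (R : Profile n m) (hxy : x ≠ y) :
    suppSize R x y + suppSize R y x = n := by
  have not_lt_iff : ∀ i, R i y < R i x ↔ ¬R i x < R i y := fun i => by
    rw [not_lt, le_iff_lt_or_eq, or_iff_left ((R i).injective.ne hxy.symm)]
  simp only [suppSize, not_lt_iff, card_filter_add_card_filter_not, card_univ, Fintype.card_fin]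

theorem suppSize_le (R : Profile n m) (x y : Fin m) : suppSize R x y ≤ n :=
  (card_filter_le _ _).trans_eq (Finset.card_fin n)

theorem suppSize_eq_of_forall_lt_iff {k : ℕ} (hk : k ≤ n)
    (h : ∀ j, R j x < R j y ↔ (j : ℕ) < k) : suppSize R x y = k := by
  simp only [suppSize, h, Fin.card_filter_val_lt, min_eq_right hk]

theorem suppSize_relabel (τ : Equiv.Perm (Fin m)) (R : Profile n m) (x y : Fin m) :
    suppSize (relabel τ R) (τ x) (τ y) = suppSize R x y := by
  simp only [suppSize, relabel_apply]

theorem suppSize_swapTop (h : DirectlyAbove R i x y) :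
    suppSize (swapTop R i x y) x y + 1 = suppSize R x y := by
  have insert_eq : univ.filter (fun j => R j x < R j y) =
      insert i (univ.filter fun j => swapTop R i x y j x < swapTop R i x y j y) := by
    ext j
    rcases ne_or_eq j i with hj | rfl
    · simp [hj, swapTop_of_ne]
    · simp [h.lt]
  rw [suppSize, suppSize, insert_eq, card_insert_of_notMem]
  simp [swapTop_apply_left, swapTop_apply_right, h.lt.le]

theorem suppSize_swapTop_of_not (h : DirectlyAbove R i x y) (hxy : ¬(u = x ∧ v = y))
    (hyx : ¬(u = y ∧ v = x)) : suppSize (swapTop R i x y) u v = suppSize R u v := by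
  simp only [suppSize, swapTop_lt_swapTop_iff h hxy hyx]

end SupportingSizes

section Strategyproofness

variable {n m : ℕ} {F : Profile n m → Fin m → ℝ} {R : Profile n m} {i : Fin n} {x y z : Fin m}

/-- The probability that the lottery `p` gives to the `t` best alternatives of voter `i`. -/
def topMass (R : Profile n m) (i : Fin n) (p : Fin m → ℝ) (t : ℕ) : ℝ :=
  ∑ y ∈ univ.filter (fun y => (R i y : ℕ) < t), p y

theorem SDPref.topMass_le {p q : Fin m → ℝ} (h : SDPref R i p q) (hpq : ∑ x, p x = ∑ x, q x)
    (t : ℕ) : topMass R i q t ≤ topMass R i p t := by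
  rcases lt_or_ge t m with ht | ht
  · simpa [topMass, Fin.lt_def] using h ((R i).symm ⟨t, ht⟩)
  · have all_lt : ∀ y, (R i y : ℕ) < t := fun y => (R i y).isLt.trans_le ht
    simp [topMass, all_lt, hpq]

theorem topMass_rank_succ (R : Profile n m) (i : Fin n) (p : Fin m → ℝ) (x : Fin m) :
    topMass R i p (R i x + 1) = topMass R i p (R i x) + p x := by
  have insert_eq : univ.filter (fun y => (R i y : ℕ) < R i x + 1) =
      insert x (univ.filter fun y => (R i y : ℕ) < R i x) := by
    ext y
    simp [le_iff_eq_or_lt, Fin.val_inj]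
  rw [topMass, insert_eq, sum_insert (by simp), add_comm, topMass]

theorem topMass_swapTop (h : DirectlyAbove R i x y) (p : Fin m → ℝ) {t : ℕ}
    (ht : t ≠ R i x + 1) : topMass (swapTop R i x y) i p t = topMass R i p t := by
  unfold topMass DirectlyAbove at *
  congr 1
  ext z
  simp only [mem_filter, mem_univ, true_and, swapTop_self, Equiv.Perm.mul_apply,
    Equiv.swap_apply_def]
  split_ifs with hzx hzy
  · subst hzx; omega
  · subst hzy; omega
  · rfl

theorem Strategyproof.topMass_swapTop_le (hsp : Strategyproof F) (hF : IsSDS F)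
    (R : Profile n m) (i : Fin n) (x y : Fin m) (t : ℕ) :
    topMass R i (F (swapTop R i x y)) t ≤ topMass R i (F R) t :=
  (hsp _ _ i fun _ hj => (swapTop_of_ne _ _ _ hj).symm).topMass_le (by rw [hF.2, hF.2]) t

theorem Strategyproof.topMass_swapTop_eq (hsp : Strategyproof F) (hF : IsSDS F)
    (h : DirectlyAbove R i x y) {t : ℕ} (ht : t ≠ R i x + 1) :
    topMass R i (F (swapTop R i x y)) t = topMass R i (F R) t := by
  refine le_antisymm (hsp.topMass_swapTop_le hF R i x y t) ?_
  have back := hsp.topMass_swapTop_le hF (swapTop R i x y) i y x t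
  rwa [swapTop_swapTop, topMass_swapTop h _ ht, topMass_swapTop h _ ht] at back

/-- Gibbard's localizedness: an adjacent swap of `x` and `y` leaves the probability of every other
alternative unchanged. -/
def Localized (F : Profile n m → Fin m → ℝ) : Prop :=
  ∀ ⦃R i x y z⦄, DirectlyAbove R i x y → z ≠ x → z ≠ y → F (swapTop R i x y) z = F R z

/-- The amount by which the probability of `x` drops when voter `i` swaps `x` with `y`. -/
def swapLoss (F : Profile n m → Fin m → ℝ) (R : Profile n m) (i : Fin n) (x y : Fin m) : ℝ :=
  F R x - F (swapTop R i x y) x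

theorem Strategyproof.localized (hsp : Strategyproof F) (hF : IsSDS F) : Localized F := by
  intro R i x y z h hx hy
  have rank_ne_x : (R i z : ℕ) ≠ R i x := by simpa [Fin.val_inj] using hx
  have rank_ne_y : (R i z : ℕ) ≠ R i x + 1 := by
    rw [← h]
    simpa [Fin.val_inj] using hy
  have below := hsp.topMass_swapTop_eq hF h rank_ne_y
  have upto := hsp.topMass_swapTop_eq hF h (t := R i z + 1) (by omega)
  rw [topMass_rank_succ, topMass_rank_succ] at upto
  linarith

theorem Strategyproof.swapLoss_nonneg (hsp : Strategyproof F) (hF : IsSDS F)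
    (h : DirectlyAbove R i x y) : 0 ≤ swapLoss F R i x y := by
  have below := hsp.topMass_swapTop_eq hF h (t := R i x) (by omega)
  have upto := hsp.topMass_swapTop_le hF R i x y (R i x + 1)
  rw [topMass_rank_succ, topMass_rank_succ] at upto
  rw [swapLoss]
  linarith

theorem Strategyproof.swapLoss_swapTop (hsp : Strategyproof F) (hF : IsSDS F)
    (h : DirectlyAbove R i x y) :
    swapLoss F (swapTop R i x y) i y x = swapLoss F R i x y := by
  have below := hsp.topMass_swapTop_eq hF h (t := R i x) (by omega)
  have upto := hsp.topMass_swapTop_eq hF h (t := R i x + 1 + 1) (by omega)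
  rw [← h, topMass_rank_succ, topMass_rank_succ, h, topMass_rank_succ, topMass_rank_succ] at upto
  rw [swapLoss, swapLoss, swapTop_swapTop]
  linarith

theorem Anonymous.swapLoss_comp (han : Anonymous F) (π : Equiv.Perm (Fin n)) (R : Profile n m)
    (i : Fin n) (x y : Fin m) :
    swapLoss F (fun j => R (π j)) i x y = swapLoss F R (π i) x y := by
  rw [swapLoss, swapLoss, swapTop_comp, han π R, han π (swapTop R (π i) x y)]

theorem Neutral.swapLoss_relabel (hneu : Neutral F) (τ : Equiv.Perm (Fin m)) (R : Profile n m)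
    (i : Fin n) (x y : Fin m) :
    swapLoss F (relabel τ R) i (τ x) (τ y) = swapLoss F R i x y := by
  rw [swapLoss, swapLoss, swapTop_relabel, hneu, hneu]

end Strategyproofness

section SwapLossTable

variable {n m : ℕ} {F G : Profile n m → Fin m → ℝ} {Δ Θ : ℕ → ℕ → ℝ} {R : Profile n m}
  {i j : Fin n} {x y z w : Fin m}

-- At least one of `x` and `y` keeps its probability under the swap of `z` and `w`, both before and
-- after the swap of `x` and `y`, and what `x` loses is what `y` gains.
theorem Strategyproof.swapLoss_swapTop_of_ne (hsp : Strategyproof F) (hF : IsSDS F) (hji : j ≠ i)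
    (hxy : DirectlyAbove R i x y) (hzw : DirectlyAbove R j z w) (hne : ¬(x = z ∧ y = w))
    (hne' : ¬(x = w ∧ y = z)) :
    swapLoss F (swapTop R j z w) i x y = swapLoss F R i x y := by
  have hxy' : DirectlyAbove (swapTop R j z w) i x y := hxy.congr (swapTop_of_ne _ _ _ hji.symm)
  have hzw' : DirectlyAbove (swapTop R i x y) j z w := hzw.congr (swapTop_of_ne _ _ _ hji)
  have loc := hsp.localized hF
  by_cases hx : x = z ∨ x = w
  · have hy : y ≠ z ∧ y ≠ w := by
      have := hxy.ne
      grind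
    rw [← hsp.swapLoss_swapTop hF hxy, ← hsp.swapLoss_swapTop hF hxy', swapLoss, swapLoss,
      swapTop_swapTop, swapTop_swapTop, swapTop_comm _ hji, loc hzw' hy.1 hy.2,
      loc hzw hy.1 hy.2]
  · rw [not_or] at hx
    rw [swapLoss, swapLoss, swapTop_comm _ hji, loc hzw' hx.1 hx.2, loc hzw hx.1 hx.2]

theorem Strategyproof.swapLoss_eq_of_lt_iff_lt (hsp : Strategyproof F) (hF : IsSDS F)
    {T : Profile n m} (hT : DirectlyAbove T i x y) (R : Profile n m) :
    R i = T i → (∀ j, R j x < R j y ↔ T j x < T j y) →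
      swapLoss F R i x y = swapLoss F T i x y := by
  induction R using swapTop_induction T with
  | base => exact fun _ _ => rfl
  | step R j z w hzw hinv ih =>
  intro hi hord
  have hji : j ≠ i := by
    rintro rfl
    exact hinv.asymm (hi ▸ hzw.lt)
  have hne : ¬(x = z ∧ y = w) := by
    rintro ⟨rfl, rfl⟩
    exact hinv.asymm ((hord j).1 hzw.lt)
  have hne' : ¬(x = w ∧ y = z) := by
    rintro ⟨rfl, rfl⟩
    exact hzw.lt.asymm ((hord j).2 hinv)
  rw [← hsp.swapLoss_swapTop_of_ne hF hji (hT.congr hi) hzw hne hne']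
  exact ih ((swapTop_of_ne _ _ _ hji.symm).trans hi)
    fun k => (swapTop_lt_swapTop_iff hzw hne hne' k).trans (hord k)

theorem exists_perm_apply_eq_and_forall_iff {ι : Type*} [Fintype ι] {p q : ι → Prop}
    [DecidablePred p] [DecidablePred q]
    (hcard : (univ.filter p).card = (univ.filter q).card) {i j : ι} (hi : p i) (hj : q j) :
    ∃ π : Equiv.Perm ι, π i = j ∧ ∀ k, q (π k) ↔ p k := by
  classical
  obtain ⟨e, he⟩ := Equiv.Perm.exists_map_finset_eq _ _ hcard
  have he_iff : ∀ k, q (e k) ↔ p k := fun k => by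
    simpa using (congrArg (e k ∈ ·) he).symm
  refine ⟨e.trans (Equiv.swap (e i) j), by simp, fun k => ?_⟩
  rw [Equiv.trans_apply, ← he_iff k]
  have := (he_iff i).2 hi
  rw [Equiv.swap_apply_def]
  split_ifs with h₁ h₂ <;> simp_all

theorem Strategyproof.swapLoss_eq_of_rank_eq (hsp : Strategyproof F) (hF : IsSDS F)
    (han : Anonymous F) (hneu : Neutral F) {R' : Profile n m} {i' : Fin n} {x' y' : Fin m}
    (h : DirectlyAbove R i x y) (h' : DirectlyAbove R' i' x' y')
    (hrank : (R i x : ℕ) = R' i' x') (hsupp : suppSize R x y = suppSize R' x' y') :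
    swapLoss F R i x y = swapLoss F R' i' x' y' := by
  let τ : Equiv.Perm (Fin m) := (R i).trans (R' i').symm
  have hrank_succ : (R i y : ℕ) = R' i' y' := by rw [h, h', hrank]
  obtain rfl : τ x = x' := (Equiv.symm_apply_eq _).2 (Fin.ext hrank)
  obtain rfl : τ y = y' := (Equiv.symm_apply_eq _).2 (Fin.ext hrank_succ)
  have hrelabel : relabel τ R i = R' i' := by
    ext z : 1
    simp [relabel, τ]
  rw [← suppSize_relabel τ] at hsupp
  have hlt : relabel τ R i (τ x) < relabel τ R i (τ y) := by
    rw [relabel_apply, relabel_apply]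
    exact h.lt
  obtain ⟨π, hπ, hπ_iff⟩ := exists_perm_apply_eq_and_forall_iff hsupp.symm h'.lt hlt
  rw [← hneu.swapLoss_relabel τ, ← hπ, ← han.swapLoss_comp]
  exact hsp.swapLoss_eq_of_lt_iff_lt hF h' _ ((congrArg _ hπ).trans hrelabel) hπ_iff

/-- The loss of `x` in an adjacent swap with `y` is `Δ r k`, where `r` is the rank of `x` and `k` is
the number of other voters who prefer `x` to `y`. The values `Δ r k` matter for `r + 1 < m` and
`k < n` only. -/
def HasSwapLossTable (F : Profile n m → Fin m → ℝ) (Δ : ℕ → ℕ → ℝ) : Prop :=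
  ∀ ⦃R i x y k⦄, DirectlyAbove R i x y → suppSize R x y = k + 1 →
    swapLoss F R i x y = Δ (R i x) k

theorem Strategyproof.exists_hasSwapLossTable (hsp : Strategyproof F) (hF : IsSDS F)
    (han : Anonymous F) (hneu : Neutral F) : ∃ Δ, HasSwapLossTable F Δ := by
  let loss (s : {s : Profile n m × Fin n × Fin m × Fin m //
      DirectlyAbove s.1 s.2.1 s.2.2.1 s.2.2.2}) : ℝ :=
    swapLoss F s.1.1 s.1.2.1 s.1.2.2.1 s.1.2.2.2
  let key (s : {s : Profile n m × Fin n × Fin m × Fin m //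
      DirectlyAbove s.1 s.2.1 s.2.2.1 s.2.2.2}) : ℕ × ℕ :=
    (s.1.1 s.1.2.1 s.1.2.2.1, suppSize s.1.1 s.1.2.2.1 s.1.2.2.2)
  have hfactors : loss.FactorsThrough key := fun s t hst =>
    hsp.swapLoss_eq_of_rank_eq hF han hneu s.2 t.2 (congrArg Prod.fst hst)
      (congrArg Prod.snd hst)
  obtain ⟨Δ, hΔ⟩ := (Function.factorsThrough_iff loss).1 hfactors
  refine ⟨fun r k => Δ (r, k + 1), fun R i x y k h hk => ?_⟩
  simpa [loss, key, hk] using congrFun hΔ ⟨(R, i, x, y), h⟩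

theorem HasSwapLossTable.congr (hF : HasSwapLossTable F Δ)
    (hΔΘ : ∀ r k, r + 1 < m → k < n → Δ r k = Θ r k) : HasSwapLossTable F Θ :=
  fun R _ x y _ h hk => (hF h hk).trans <|
    hΔΘ _ _ h.rank_succ_lt <| Nat.lt_of_succ_le (hk.symm.trans_le (suppSize_le R x y))

theorem HasSwapLossTable.add (hF : HasSwapLossTable F Δ) (hG : HasSwapLossTable G Θ) :
    HasSwapLossTable (F + G) (Δ + Θ) := fun R i x y k h hk => by
  have hF := hF h hk
  have hG := hG h hk
  simp only [swapLoss, Pi.add_apply] at hF hG ⊢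
  linarith

theorem Localized.add (hF : Localized F) (hG : Localized G) : Localized (F + G) :=
  fun _ _ _ _ _ h hx hy => congrArg₂ (· + ·) (hF h hx hy) (hG h hx hy)

theorem Neutral.add (hF : Neutral F) (hG : Neutral G) : Neutral (F + G) :=
  fun τ R x => congrArg₂ (· + ·) (hF τ R x) (hG τ R x)

theorem HasSwapLossTable.swapLoss_eq (hF : HasSwapLossTable F Δ) (hG : HasSwapLossTable G Δ)
    (h : DirectlyAbove R i x y) : swapLoss F R i x y = swapLoss G R i x y :=
  (hF h (suppSize_swapTop h).symm).trans (hG h (suppSize_swapTop h).symm).symm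

theorem HasSwapLossTable.sub_eq_sub (hF : HasSwapLossTable F Δ) (hG : HasSwapLossTable G Δ)
    (hFloc : Localized F) (hGloc : Localized G) (R T : Profile n m) :
    ∀ u, F R u - G R u = F T u - G T u := by
  induction R using swapTop_induction T with
  | base => exact fun _ => rfl
  | step R i x y h _ ih =>
  intro u
  rw [← ih u]
  by_cases hx : u = x
  · subst hx
    have := hF.swapLoss_eq hG h
    simp only [swapLoss] at this
    linarith
  by_cases hy : u = y
  · subst hy
    have := hF.swapLoss_eq hG h.symm_swapTop
    simp only [swapLoss, swapTop_swapTop] at this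
    linarith
  rw [hFloc h hx hy, hGloc h hx hy]

theorem HasSwapLossTable.exists_eq_add_const (hF : HasSwapLossTable F Δ)
    (hG : HasSwapLossTable G Δ) (hFloc : Localized F) (hGloc : Localized G) (hFneu : Neutral F)
    (hGneu : Neutral G) (hm : 0 < m) : ∃ c : ℝ, ∀ R x, F R x = G R x + c := by
  let T : Profile n m := fun _ => 1
  let x₀ : Fin m := ⟨0, hm⟩
  refine ⟨F T x₀ - G T x₀, fun R x => ?_⟩
  have hconst := hF.sub_eq_sub hG hFloc hGloc (relabel (Equiv.swap x₀ x) T) R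
    (Equiv.swap x₀ x x₀)
  rw [hFneu, hGneu, Equiv.swap_apply_left] at hconst
  linarith

theorem exists_directlyAbove_suppSize_eq {r k : ℕ} (hr : r + 1 < m) (hk : k < n) :
    ∃ (R : Profile n m) (i : Fin n) (x y : Fin m),
      DirectlyAbove R i x y ∧ (R i x : ℕ) = r ∧ suppSize R x y = k + 1 := by
  let x : Fin m := ⟨r, by omega⟩
  let y : Fin m := ⟨r + 1, hr⟩
  refine ⟨fun j => if (j : ℕ) < k + 1 then 1 else Equiv.swap x y, ⟨0, by omega⟩, x, y, ?_, ?_,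
    suppSize_eq_of_forall_lt_iff hk fun j => ?_⟩
  · simp [DirectlyAbove, x, y]
  · simp [x]
  · split_ifs with h <;> simp [h, x, y]

theorem HasSwapLossTable.nonneg (hΔ : HasSwapLossTable F Δ) (hsp : Strategyproof F)
    (hF : IsSDS F) {r k : ℕ} (hr : r + 1 < m) (hk : k < n) : 0 ≤ Δ r k := by
  obtain ⟨R, i, x, y, h, rfl, hsupp⟩ := exists_directlyAbove_suppSize_eq hr hk
  exact hΔ h hsupp ▸ hsp.swapLoss_nonneg hF h

-- Undoing a swap turns a table entry into its mirror image.
theorem HasSwapLossTable.reflect (hΔ : HasSwapLossTable F Δ) (hsp : Strategyproof F)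
    (hF : IsSDS F) {r k l : ℕ} (hr : r + 1 < m) (hkl : k + l + 1 = n) : Δ r k = Δ r l := by
  obtain ⟨R, i, x, y, h, rfl, hsupp⟩ := exists_directlyAbove_suppSize_eq (n := n) (k := k) hr
    (by omega)
  have hsupp_swap : suppSize (swapTop R i x y) y x = l + 1 := by
    have := suppSize_swapTop h
    have := suppSize_add_suppSize (swapTop R i x y) h.ne
    omega
  rw [← hΔ h hsupp, ← hsp.swapLoss_swapTop hF h, hΔ h.symm_swapTop hsupp_swap,
    swapTop_apply_right]

theorem exists_three_consecutive_suppSize_eq {r k l : ℕ} (hr : r + 2 < m) (hlk : l ≤ k)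
    (hk : k < n) :
    ∃ (R : Profile n m) (i : Fin n) (x y z : Fin m), DirectlyAbove R i x y ∧
      DirectlyAbove R i y z ∧ (R i x : ℕ) = r ∧ suppSize R x y = k + 1 ∧
      suppSize R x z = l + 1 := by
  let x : Fin m := ⟨r, by omega⟩
  let y : Fin m := ⟨r + 1, by omega⟩
  let z : Fin m := ⟨r + 2, hr⟩
  -- The rankings are `x y z` for the first `l + 1` voters, `z x y` for the next `k - l` voters and
  -- `z y x` for all others.
  refine ⟨fun j => if (j : ℕ) < l + 1 then 1 else
      if (j : ℕ) < k + 1 then Equiv.swap x y * Equiv.swap y z else Equiv.swap x z,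
    ⟨0, by omega⟩, x, y, z, ?_, ?_, ?_,
    suppSize_eq_of_forall_lt_iff hk fun j => ?_,
    suppSize_eq_of_forall_lt_iff (by omega) fun j => ?_⟩
  · simp [DirectlyAbove, x, y]
  · simp [DirectlyAbove, y, z]
  · simp [x]
  all_goals
    split_ifs <;> simp [Equiv.swap_apply_def, x, y, z] <;> omega

-- Both sides are the total loss of `x` on its way from the top to the bottom of `x y z`, along the
-- two reduced words of the transposition of `x` and `z`.
theorem Strategyproof.swapLoss_add_swapLoss (hsp : Strategyproof F) (hF : IsSDS F)
    (hxy : DirectlyAbove R i x y) (hyz : DirectlyAbove R i y z) :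
    swapLoss F R i x y + swapLoss F (swapTop R i x y) i x z =
      swapLoss F (swapTop R i y z) i x z +
        swapLoss F (swapTop (swapTop R i y z) i x z) i x y := by
  have hxz := hxy.ne_of_directlyAbove hyz
  have start := hsp.localized hF hyz hxy.ne hxz
  have finish := hsp.localized hF (hxy.symm_swapTop.swapTop_bottom (hxy.swapTop_top hyz))
    hxy.ne hxz
  rw [swapTop_braid] at finish
  simp only [swapLoss]
  linarith

theorem HasSwapLossTable.exchange_succ (hΔ : HasSwapLossTable F Δ) (hsp : Strategyproof F)
    (hF : IsSDS F) {r k l : ℕ} (hr : r + 2 < m) (hlk : l ≤ k) (hk : k < n) :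
    Δ r k + Δ (r + 1) l = Δ r l + Δ (r + 1) k := by
  obtain ⟨R, i, x, y, z, hxy, hyz, rfl, hsupp_y, hsupp_z⟩ :=
    exists_three_consecutive_suppSize_eq hr hlk hk
  have hxz := hxy.ne_of_directlyAbove hyz
  have hxz_Q := hxy.swapTop_bottom hyz
  have hpath := hsp.swapLoss_add_swapLoss hF hxy hyz
  rw [hΔ hxy hsupp_y,
    hΔ (hxy.swapTop_top hyz) (k := l)
      (by rwa [suppSize_swapTop_of_not hxy (by simp [hyz.ne.symm]) (by simp [hxy.ne])]),
    hΔ hxz_Q (k := l)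
      (by rwa [suppSize_swapTop_of_not hyz (by simp [hxy.ne]) (by simp [hxz])]),
    hΔ (hxz_Q.swapTop_top hyz.symm_swapTop) (k := k)
      (by rwa [suppSize_swapTop_of_not hxz_Q (by simp [hyz.ne]) (by simp [hxz]),
        suppSize_swapTop_of_not hyz (by simp [hxy.ne]) (by simp [hxz])]),
    swapTop_apply_left, swapTop_apply_left, swapTop_apply_right, hxy,
    swapTop_apply_of_ne_of_ne _ _ hxy.ne hxz] at hpath
  exact hpath

theorem HasSwapLossTable.exchange (hΔ : HasSwapLossTable F Δ) (hsp : Strategyproof F)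
    (hF : IsSDS F) {r s k l : ℕ} (hr : r + 1 < m) (hs : s + 1 < m) (hk : k < n) (hl : l < n) :
    Δ r k + Δ s l = Δ r l + Δ s k := by
  have sub_eq : ∀ r, r + 1 < m → Δ r k - Δ r l = Δ 0 k - Δ 0 l := by
    intro r
    induction r with
    | zero => exact fun _ => rfl
    | succ r ih =>
      intro hr
      have hprev := ih (by omega)
      rcases le_total l k with hlk | hkl
      · linarith [hΔ.exchange_succ hsp hF hr hlk hk]
      · linarith [hΔ.exchange_succ hsp hF hr hkl hl]
  linarith [sub_eq r hr, sub_eq s hs]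

end SwapLossTable

section Scores

variable {n m : ℕ}

/-- The positional score of `x`: each voter who gives `x` the rank `r` contributes `a r`. -/
def pointScore (a : ℕ → ℝ) (R : Profile n m) (x : Fin m) : ℝ :=
  ∑ i, a (R i x)

/-- The supporting size score of `x`: each comparison of `x` with another alternative in which `x`
has the support of `k` voters contributes `b k`. -/
def supportScore (b : ℕ → ℝ) (R : Profile n m) (x : Fin m) : ℝ :=
  ∑ y with y ≠ x, b (suppSize R x y)

theorem pointScore_sub_pointScore_swapTop (a : ℕ → ℝ) (R : Profile n m) (i : Fin n)
    (x y z : Fin m) :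
    pointScore a R z - pointScore a (swapTop R i x y) z =
      a (R i z) - a (swapTop R i x y i z) := by
  rw [pointScore, pointScore, ← sum_sub_distrib]
  refine sum_eq_single_of_mem i (mem_univ i) fun j _ hj => ?_
  rw [swapTop_of_ne _ _ _ hj, sub_self]

theorem localized_pointScore (a : ℕ → ℝ) :
    Localized (pointScore a : Profile n m → Fin m → ℝ) := by
  intro R i x y z _ hx hy
  have := pointScore_sub_pointScore_swapTop a R i x y z
  rw [swapTop_apply_of_ne_of_ne _ _ hx hy] at this
  linarith

theorem hasSwapLossTable_pointScore (a : ℕ → ℝ) :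
    HasSwapLossTable (pointScore a : Profile n m → Fin m → ℝ)
      (fun r _ => a r - a (r + 1)) := by
  intro R i x y k h _
  rw [swapLoss, pointScore_sub_pointScore_swapTop, swapTop_apply_left, h]

theorem neutral_pointScore (a : ℕ → ℝ) :
    Neutral (pointScore a : Profile n m → Fin m → ℝ) := by
  intro τ R x
  simp only [pointScore, relabel_apply]

theorem localized_supportScore (b : ℕ → ℝ) :
    Localized (supportScore b : Profile n m → Fin m → ℝ) := by
  intro R i x y z h hx hy
  simp only [supportScore, suppSize_swapTop_of_not h (not_and_of_not_left _ hx)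
    (not_and_of_not_left _ hy)]

theorem hasSwapLossTable_supportScore (b : ℕ → ℝ) :
    HasSwapLossTable (supportScore b : Profile n m → Fin m → ℝ)
      (fun _ k => b (k + 1) - b k) := by
  intro R i x y k h hk
  have hk_swap : suppSize (swapTop R i x y) x y = k := by
    have := suppSize_swapTop h
    omega
  change _ = b (k + 1) - b k
  rw [swapLoss, supportScore, supportScore, ← sum_sub_distrib, ← hk, ← hk_swap]
  refine sum_eq_single_of_mem y (by simp [h.ne.symm]) fun u _ hu => ?_
  rw [suppSize_swapTop_of_not h (not_and_of_not_right _ hu) (not_and_of_not_left _ h.ne),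
    sub_self]

theorem neutral_supportScore (b : ℕ → ℝ) :
    Neutral (supportScore b : Profile n m → Fin m → ℝ) := by
  intro τ R x
  refine (sum_equiv τ (by simp) fun y _ => ?_).symm
  rw [suppSize_relabel]

end Scores

section ScoreDecomposition

variable {n m : ℕ} {F : Profile n m → Fin m → ℝ}

theorem exists_nonneg_eq_add_of_exchange {ι κ : Type*} {s : Finset ι} {t : Set κ} {Δ : ι → κ → ℝ}
    (hs : s.Nonempty) (nonneg : ∀ r ∈ s, ∀ k ∈ t, 0 ≤ Δ r k)
    (exchange : ∀ r ∈ s, ∀ r' ∈ s, ∀ k ∈ t, ∀ l ∈ t, Δ r k + Δ r' l = Δ r l + Δ r' k) :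
    ∃ (A : ι → ℝ) (B : κ → ℝ), (∀ r ∈ s, 0 ≤ A r) ∧ (∀ k ∈ t, 0 ≤ B k) ∧
      ∀ r ∈ s, ∀ k ∈ t, Δ r k = A r + B k := by
  rcases t.eq_empty_or_nonempty with rfl | ⟨k₀, hk₀⟩
  · exact ⟨0, 0, by simp⟩
  obtain ⟨r₀, hr₀, hmin⟩ := s.exists_min_image (Δ · k₀) hs
  refine ⟨fun r => Δ r k₀ - Δ r₀ k₀, Δ r₀, fun r hr => sub_nonneg.2 (hmin r hr), nonneg r₀ hr₀,
    fun r hr k hk => ?_⟩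
  linarith [exchange r hr r₀ hr₀ k hk k₀ hk₀]

theorem sum_range_add_sum_range_of_reflect {B : ℕ → ℝ}
    (hB : ∀ k l, k + l + 1 = n → B k = B l) {k l : ℕ} (hkl : k + l = n) :
    ∑ j ∈ range k, B j + ∑ j ∈ range l, B j = ∑ j ∈ range n, B j := by
  rw [← hkl, sum_range_add, ← sum_range_reflect (fun j => B (k + j))]
  refine congrArg _ (sum_congr rfl fun j hj => hB _ _ ?_)
  have := mem_range.1 hj
  omega

/-- `F` is the sum of the positional score with weights `a` and the supporting size score with
weights `b`, where `a` and `b` behave as the weights of a strategyproof scheme do and the constant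
that can be shifted between the two scores is fixed by `b 0 = 0`. -/
structure IsScoreSum (F : Profile n m → Fin m → ℝ) (a b : ℕ → ℝ) : Prop where
  eq_add : ∀ R x, F R x = pointScore a R x + supportScore b R x
  antitone : Antitone a
  monotoneOn : MonotoneOn b (Set.Iic n)
  zero : b 0 = 0
  reflect : ∀ k l, k + l = n → b k + b l = b n

theorem HasSwapLossTable.exists_isScoreSum {A B : ℕ → ℝ}
    (hΔ : HasSwapLossTable F fun r k => A r + B k) (hloc : Localized F) (hneu : Neutral F)
    (hn : 0 < n) (hm : 0 < m) (hA : ∀ r, r + 1 < m → 0 ≤ A r) (hB : ∀ k < n, 0 ≤ B k)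
    (hB_reflect : ∀ k l, k + l + 1 = n → B k = B l) : ∃ a b, IsScoreSum F a b := by
  let a (r : ℕ) : ℝ := ∑ s ∈ Ico r (m - 1), A s
  let b (k : ℕ) : ℝ := ∑ j ∈ range k, B j
  have hG : HasSwapLossTable (pointScore a + supportScore b : Profile n m → Fin m → ℝ)
      (fun r k => A r + B k) := by
    refine ((hasSwapLossTable_pointScore a).add (hasSwapLossTable_supportScore b)).congr
      fun r k hr _ => ?_
    simp only [Pi.add_apply, a, b, sum_range_succ_sub_sum,
      sum_eq_sum_Ico_succ_bot (Nat.lt_sub_of_add_lt hr), add_sub_cancel_right]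
  obtain ⟨c, hc⟩ := hΔ.exists_eq_add_const hG hloc
    ((localized_pointScore a).add (localized_supportScore b)) hneu
    ((neutral_pointScore a).add (neutral_supportScore b)) hm
  refine ⟨fun r => a r + c / n, b, fun R x => ?_, fun r s hrs => ?_, fun k _ l hl hkl => ?_,
    sum_range_zero B, fun _ _ => sum_range_add_sum_range_of_reflect hB_reflect⟩
  · have hn' : (n : ℝ) ≠ 0 := by positivity
    simp only [hc, Pi.add_apply, pointScore, sum_add_distrib, sum_const, card_univ,
      Fintype.card_fin, nsmul_eq_mul, mul_div_cancel₀ c hn']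
    ring
  · gcongr
    refine sum_le_sum_of_subset_of_nonneg (Ico_subset_Ico_left hrs) fun t ht _ => hA t ?_
    have := mem_Ico.1 ht
    omega
  · refine sum_le_sum_of_subset_of_nonneg (range_subset_range.2 hkl) fun j hj _ => hB j ?_
    exact (mem_range.1 hj).trans_le hl

theorem Strategyproof.exists_isScoreSum (hsp : Strategyproof F) (hF : IsSDS F)
    (han : Anonymous F) (hneu : Neutral F) (hn : 0 < n) (hm : 1 < m) :
    ∃ a b, IsScoreSum F a b := by
  obtain ⟨Δ, hΔ⟩ := hsp.exists_hasSwapLossTable hF han hneu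
  have rank_lt : ∀ r ∈ range (m - 1), r + 1 < m := fun r hr => by
    have := mem_range.1 hr
    omega
  obtain ⟨A, B, hA, hB, hAB⟩ := exists_nonneg_eq_add_of_exchange
    (s := range (m - 1)) (t := Set.Iio n) (Δ := Δ) (nonempty_range_iff.2 (by omega))
    (fun r hr k hk => hΔ.nonneg hsp hF (rank_lt r hr) hk)
    (fun r hr s hs k hk l hl => hΔ.exchange hsp hF (rank_lt r hr) (rank_lt s hs) hk hl)
  have mem_range_of_lt : ∀ r, r + 1 < m → r ∈ range (m - 1) := fun r hr =>
    mem_range.2 (Nat.lt_sub_of_add_lt hr)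
  refine (hΔ.congr fun r k hr hk => hAB r (mem_range_of_lt r hr) k hk).exists_isScoreSum
    (hsp.localized hF) hneu hn (by omega) (fun r hr => hA r (mem_range_of_lt r hr)) hB
    fun k l hkl => ?_
  have hreflect := hΔ.reflect hsp hF hm hkl
  rw [hAB 0 (mem_range_of_lt 0 hm) k (Set.mem_Iio.2 (by omega)),
    hAB 0 (mem_range_of_lt 0 hm) l (Set.mem_Iio.2 (by omega))] at hreflect
  exact add_left_cancel hreflect

end ScoreDecomposition

section TestProfiles

variable {n m : ℕ}

theorem pointScore_one (a : ℕ → ℝ) (x : Fin m) :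
    pointScore a (1 : Profile n m) x = n * a x := by
  simp [pointScore]

theorem suppSize_one (x y : Fin m) :
    suppSize (1 : Profile n m) x y = if x < y then n else 0 := by
  by_cases h : x < y <;> simp [suppSize, h]

theorem supportScore_one {b : ℕ → ℝ} (hb : b 0 = 0) (x : Fin m) :
    supportScore b (1 : Profile n m) x = ((m : ℝ) - 1 - x) * b n := by
  have hcast : ((m - 1 - x : ℕ) : ℝ) = (m : ℝ) - 1 - x := by
    have := x.isLt
    rw [Nat.cast_sub (by omega), Nat.cast_sub (by omega), Nat.cast_one]
  have hfilter : univ.filter (fun y => y ≠ x ∧ x < y) = Ioi x := by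
    ext y
    simpa using fun h : x < y => h.ne'
  simp only [supportScore, suppSize_one, apply_ite b, hb, ← sum_filter, filter_filter, hfilter,
    sum_const, Fin.card_Ioi, nsmul_eq_mul, hcast]

theorem exists_fin_fun_card_fiber_le {l q : ℕ} (hq : 0 < q) (hqn : q ≤ n) (h : n ≤ l * q) :
    ∃ t : Fin n → Fin l, (∀ y, #{i | t i = y} ≤ q) ∧ ∃ y, #{i | t i = y} = q := by
  refine ⟨fun i => ⟨i / q, Nat.div_lt_of_lt_mul (by grind)⟩, fun y => ?_, ⟨0, by grind⟩, ?_⟩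
  · have hsub : (univ.filter fun i : Fin n => (i : ℕ) / q = y).map Fin.valEmbedding ⊆
        Ico (y * q) (y * q + q) := by
      intro i hi
      obtain ⟨j, hj, rfl⟩ := mem_map.1 hi
      have := (mem_filter.1 hj).2
      rw [mem_Ico, Fin.valEmbedding_apply, ← this]
      exact ⟨Nat.div_mul_le_self _ _, Nat.lt_div_mul_add hq⟩
    simpa [Fin.ext_iff] using card_le_card hsub
  · simp [Fin.ext_iff, Nat.div_eq_zero_iff, hq.ne', Fin.card_filter_val_lt, hqn]

theorem exists_perm_apply_eq_zero_and_one {t x : Fin m} (h : t ≠ x) :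
    ∃ σ : Equiv.Perm (Fin m), (σ t : ℕ) = 0 ∧ (σ x : ℕ) = 1 := by
  have hm : 1 < m := by
    by_contra! hm
    omega
  let first : Fin m := ⟨0, by omega⟩
  let second : Fin m := ⟨1, hm⟩
  have hx : Equiv.swap t first x ≠ first := fun hx =>
    h.symm (by simpa [Equiv.swap_apply_eq_iff] using hx)
  refine ⟨Equiv.swap (Equiv.swap t first x) second * Equiv.swap t first, ?_, by simp [second]⟩
  rw [Equiv.Perm.mul_apply, Equiv.swap_apply_left,
    Equiv.swap_apply_of_ne_of_ne hx.symm (by simp [first, second])]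

theorem exists_rank_eq_one_and_suppSize_eq_card_fiber {x : Fin m} {t : Fin n → Fin m}
    (ht : ∀ i, t i ≠ x) :
    ∃ R : Profile n m, (∀ i, (R i x : ℕ) = 1) ∧ ∀ y, suppSize R y x = #{i | t i = y} := by
  choose R hR_top hR_second using fun i => exists_perm_apply_eq_zero_and_one (ht i)
  refine ⟨R, hR_second, fun y => congrArg card (filter_congr fun i _ => ?_)⟩
  rw [Fin.lt_def, hR_second, Nat.lt_one_iff, ← hR_top i, Fin.val_inj,
    (R i).injective.eq_iff, eq_comm]

theorem exists_condorcetWinner_rank_eq_one (hn : 0 < n) (hnm : n ≤ (m - 1) * ((n - 1) / 2)) :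
    ∃ (R : Profile n m) (x y : Fin m), y ≠ x ∧ (∀ i, (R i x : ℕ) = 1) ∧ CondorcetWinner R x ∧
      suppSize R x y = n / 2 + 1 := by
  obtain ⟨l, rfl⟩ : ∃ l, m = l + 1 := ⟨m - 1, by grind⟩
  obtain ⟨t, ht_le, y, hy⟩ := exists_fin_fun_card_fiber_le (n := n) (l := l) (q := (n - 1) / 2)
    (Nat.pos_of_mul_pos_left (hn.trans_le hnm)) (by omega) hnm
  obtain ⟨R, hR, hsupp⟩ := exists_rank_eq_one_and_suppSize_eq_card_fiber
    (x := 0) (t := fun i => (t i).succ) fun i => Fin.succ_ne_zero _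
  simp only [Fin.forall_fin_succ, Fin.succ_inj] at hsupp
  refine ⟨R, 0, y.succ, Fin.succ_ne_zero y, hR, fun u hu => ?_, ?_⟩
  · obtain ⟨u, rfl⟩ := Fin.exists_succ_eq.2 hu
    have := suppSize_add_suppSize R hu
    have := hsupp.2 u ▸ ht_le u
    omega
  · have := suppSize_add_suppSize R (Fin.succ_ne_zero y)
    have := (hsupp.2 y).trans hy
    omega

end TestProfiles

section UniformDictatorshipAndCopeland

variable {n m : ℕ} {F : Profile n m → Fin m → ℝ} {a b : ℕ → ℝ} {α : ℝ}

theorem dictProb_eq (R : Profile n m) (i : Fin n) (x : Fin m) :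
    dictProb R i x = if (R i x : ℕ) = 0 then 1 else 0 := by
  refine if_congr ⟨fun h => ?_, fun h y => Fin.le_def.2 (h ▸ Nat.zero_le _)⟩ rfl rfl
  have := h ((R i).symm ⟨0, x.pos⟩)
  rw [Equiv.apply_symm_apply, Fin.le_def] at this
  exact Nat.le_zero.1 this

theorem pointScore_eq_mul_uniformRD (ha : ∀ r, 0 < r → r < m → a r = 0) (hn : 0 < n)
    (R : Profile n m) (x : Fin m) :
    pointScore a R x = n * a 0 * uniformRD n m R x := by
  have hn' : (n : ℝ) ≠ 0 := by positivity
  have hweight : ∀ i, a (R i x) = a 0 * dictProb R i x := fun i => by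
    rw [dictProb_eq]
    split_ifs with h
    · rw [h, mul_one]
    · rw [ha _ (Nat.pos_of_ne_zero h) (R i x).isLt, mul_zero]
  rw [pointScore, uniformRD, sum_congr rfl fun i _ => hweight i, ← mul_sum]
  field_simp

theorem supportScore_eq_mul_randCopeland {w : ℝ} (hb : ∀ k ≤ n, b k = w * copelandWeight n m k)
    (R : Profile n m) (x : Fin m) : supportScore b R x = w * randCopeland n m R x := by
  rw [supportScore, randCopeland, mul_sum]
  exact sum_congr rfl fun y _ => hb _ (suppSize_le R x y)

theorem sum_fin_pred_sub (m : ℕ) : ∑ x : Fin m, ((m : ℝ) - 1 - x) = m * (m - 1) / 2 := by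
  induction m with
  | zero => simp
  | succ m ih =>
    have hshift (x : Fin m) : ((m + 1 : ℕ) : ℝ) - 1 - (x.succ : ℕ) = (m : ℝ) - 1 - x := by
      push_cast [Fin.val_succ]
      ring
    rw [Fin.sum_univ_succ, sum_congr rfl fun x _ => hshift x, ih]
    push_cast [Fin.val_zero]
    ring

namespace IsScoreSum

theorem apply_one (h : IsScoreSum F a b) (x : Fin m) :
    F 1 x = n * a x + ((m : ℝ) - 1 - x) * b n := by
  rw [h.eq_add, pointScore_one, supportScore_one h.zero]

theorem pointWeight_nonneg (h : IsScoreSum F a b) (hF : IsSDS F) (hn : 0 < n) {r : ℕ}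
    (hr : r < m) : 0 ≤ a r := by
  let worst : Fin m := ⟨m - 1, by omega⟩
  have hworst := hF.1 1 worst
  have hzero : (m : ℝ) - 1 - (worst : ℕ) = 0 := by
    simp [worst, Nat.cast_sub (Nat.one_le_of_lt hr)]
  rw [h.apply_one, hzero, zero_mul, add_zero] at hworst
  calc
    0 ≤ a (m - 1) := (mul_nonneg_iff_of_pos_left (by positivity)).1 hworst
    _ ≤ a r := h.antitone (Nat.le_sub_one_of_lt hr)

theorem supportWeight_le_top (h : IsScoreSum F a b) {k : ℕ} (hk : k ≤ n) : b k ≤ b n :=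
  h.monotoneOn hk Set.self_mem_Iic hk

theorem supportWeight_top_nonneg (h : IsScoreSum F a b) : 0 ≤ b n :=
  h.zero ▸ h.supportWeight_le_top n.zero_le

theorem supportScore_le (h : IsScoreSum F a b) (R : Profile n m) {x y : Fin m} (hyx : y ≠ x) :
    supportScore b R x ≤ b (suppSize R x y) + ((m : ℝ) - 2) * b n := by
  have hmem : y ∈ univ.filter fun u => u ≠ x := by simpa using hyx
  have hcard : (#((univ.filter fun u => u ≠ x).erase y) : ℝ) = (m : ℝ) - 2 := by
    have hm : 2 ≤ m := by
      by_contra! hm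
      omega
    rw [card_erase_of_mem hmem, filter_ne', card_erase_of_mem (mem_univ x), card_univ,
      Fintype.card_fin, Nat.sub_sub, Nat.cast_sub hm, Nat.cast_ofNat]
  rw [supportScore, ← add_sum_erase _ _ hmem, ← hcard, ← nsmul_eq_mul]
  gcongr
  exact sum_le_card_nsmul _ _ _ fun u _ => h.supportWeight_le_top (suppSize_le R x u)

theorem le_of_condorcetConsistent (h : IsScoreSum F a b) (hcc : CondorcetConsistent F α)
    (hn : 0 < n) (hnm : n ≤ (m - 1) * ((n - 1) / 2)) :
    α ≤ n * a 1 + (b (n / 2 + 1) + ((m : ℝ) - 2) * b n) := by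
  obtain ⟨R, x, y, hyx, hrank, hwin, hsupp⟩ := exists_condorcetWinner_rank_eq_one hn hnm
  calc
    α ≤ F R x := hcc R x hwin
    _ = n * a 1 + supportScore b R x := by simp [h.eq_add, pointScore, hrank]
    _ ≤ _ := by
      gcongr
      exact hsupp ▸ h.supportScore_le R hyx

theorem le_of_exPostEff (h : IsScoreSum F a b) {β : ℝ} (heff : ExPostEff F β) (hm : 1 < m) :
    n * a 1 + ((m : ℝ) - 2) * b n ≤ β := by
  let second : Fin m := ⟨1, hm⟩
  have hdom : ParetoDominated (1 : Profile n m) second :=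
    ⟨⟨0, by omega⟩, fun _ => by simp [second]⟩
  calc
    n * a 1 + ((m : ℝ) - 2) * b n = F 1 second := by
      rw [h.apply_one, Nat.cast_one]
      ring
    _ ≤ β := heff _ _ hdom

theorem pointWeight_one_eq_zero_and_majority_eq (h : IsScoreSum F a b) (hF : IsSDS F)
    (hm : 2 < m) (hn : 1 < n) (hnm : n ≤ (m - 1) * ((n - 1) / 2)) (hcc : CondorcetConsistent F α)
    (heff : ExPostEff F (((m : ℝ) - 2) / ((m : ℝ) - 1) * α)) :
    a 1 = 0 ∧ b (n / 2 + 1) = b n := by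
  have hm' : (0 : ℝ) < m - 2 := sub_pos.2 (by exact_mod_cast hm)
  have hn' : (0 : ℝ) < n := by positivity
  have ha := h.pointWeight_nonneg hF (r := 1) (by omega) (by omega)
  have hb := h.supportWeight_le_top (k := n / 2 + 1) (by omega)
  have hupper := h.le_of_condorcetConsistent hcc (by omega) hnm
  have hlower := h.le_of_exPostEff heff (by omega)
  have hlower : (m - 1) * (n * a 1 + ((m : ℝ) - 2) * b n) ≤ (m - 2) * α := by
    rwa [div_mul_eq_mul_div, le_div_iff₀ (by linarith), mul_comm] at hlower
  have hgap : n * a 1 + ((m : ℝ) - 2) * (b n - b (n / 2 + 1)) ≤ 0 := by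
    nlinarith [mul_le_mul_of_nonneg_left hupper hm'.le]
  have ha' := mul_nonneg hn'.le ha
  have hb' := mul_nonneg hm'.le (sub_nonneg.2 hb)
  constructor
  · exact (mul_eq_zero.1 (le_antisymm (by linarith) ha')).resolve_left hn'.ne'
  · exact (sub_eq_zero.1 <|
      (mul_eq_zero.1 (le_antisymm (by linarith) hb')).resolve_left hm'.ne').symm

theorem pointWeight_eq_zero (h : IsScoreSum F a b) (hF : IsSDS F) (hn : 0 < n) (ha : a 1 = 0)
    {r : ℕ} (hr : 0 < r) (hrm : r < m) : a r = 0 :=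
  le_antisymm ((h.antitone hr).trans_eq ha) (h.pointWeight_nonneg hF hn hrm)

theorem supportWeight_eq_mul_copelandWeight (h : IsScoreSum F a b) (hm : 1 < m)
    (hb : b (n / 2 + 1) = b n) {k : ℕ} (hk : k ≤ n) :
    b k = m * (m - 1) / 2 * b n * copelandWeight n m k := by
  have hm₀ : (m : ℝ) ≠ 0 := by positivity
  have hm₁ : (m : ℝ) - 1 ≠ 0 := sub_ne_zero.2 (by exact_mod_cast hm.ne')
  have majority : ∀ l ≤ n, n < 2 * l → b l = b n := fun l hl hnl =>
    le_antisymm (h.supportWeight_le_top hl) <| hb.symm.trans_le <|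
      h.monotoneOn (Set.mem_Iic.2 (by omega)) hl (by omega)
  have hreflect := h.reflect k (n - k) (by omega)
  rw [copelandWeight]
  split_ifs with hgt heq
  · rw [majority k hk hgt]
    field_simp
  · rw [show n - k = k by omega] at hreflect
    field_simp
    linarith
  · rw [majority (n - k) (by omega) (by omega)] at hreflect
    linarith

theorem weights_sum_eq_one (h : IsScoreSum F a b) (hF : IsSDS F) (hm : 0 < m)
    (ha : ∀ r, 0 < r → r < m → a r = 0) : n * a 0 + m * (m - 1) / 2 * b n = 1 := by
  have hpoint : ∑ x : Fin m, n * a x = n * a 0 :=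
    sum_eq_single_of_mem (⟨0, hm⟩ : Fin m) (mem_univ _) fun x _ hx => by
      rw [ha x (Nat.pos_of_ne_zero fun h => hx (Fin.ext h)) x.isLt, mul_zero]
  calc
    n * a 0 + m * (m - 1) / 2 * b n = ∑ x : Fin m, F 1 x := by
      simp only [h.apply_one, sum_add_distrib, ← sum_mul, hpoint, sum_fin_pred_sub]
    _ = 1 := hF.2 1

end IsScoreSum

end UniformDictatorshipAndCopeland

theorem mixture_of_uniformRD_and_randCopeland_general (n m : ℕ) (hm : 4 ≤ m) (hn : 3 ≤ n)
    (hmn : m ≠ 4 ∨ n ≠ 4) (α : ℝ) (F : Profile n m → Fin m → ℝ) (hF : IsSDS F)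
    (hsp : Strategyproof F) (han : Anonymous F) (hneu : Neutral F)
    (hcc : CondorcetConsistent F α)
    (heff : ExPostEff F (((m : ℝ) - 2) / ((m : ℝ) - 1) * α)) :
    ∃ lam : ℝ, 0 ≤ lam ∧ lam ≤ 1 ∧
      ∀ R x, F R x = lam * uniformRD n m R x + (1 - lam) * randCopeland n m R x := by
  have hnm : n ≤ (m - 1) * ((n - 1) / 2) := by
    obtain rfl | hm : m = 4 ∨ 5 ≤ m := by omega
    · omega
    · have := Nat.mul_le_mul_right ((n - 1) / 2) (show 4 ≤ m - 1 by omega)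
      omega
  obtain ⟨a, b, h⟩ := hsp.exists_isScoreSum hF han hneu (by omega) (by omega)
  obtain ⟨ha₁, hb_majority⟩ :=
    h.pointWeight_one_eq_zero_and_majority_eq hF (by omega) (by omega) hnm hcc heff
  have ha : ∀ r, 0 < r → r < m → a r = 0 := fun r => h.pointWeight_eq_zero hF (by omega) ha₁
  have hsum := h.weights_sum_eq_one hF (by omega) ha
  have hcopeland : 0 ≤ m * (m - 1) / 2 * b n := by
    have hm' : (0 : ℝ) ≤ m - 1 := sub_nonneg.2 (by exact_mod_cast (by omega : 1 ≤ m))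
    have := h.supportWeight_top_nonneg
    positivity
  refine ⟨n * a 0, mul_nonneg n.cast_nonneg (h.pointWeight_nonneg hF (by omega) (by omega)),
    by linarith, fun R x => ?_⟩
  rw [h.eq_add, pointScore_eq_mul_uniformRD ha (by omega), ← hsum, add_sub_cancel_left,
    supportScore_eq_mul_randCopeland fun k => h.supportWeight_eq_mul_copelandWeight (by omega)
      hb_majority]

/-- For `m ≥ 4` and `n ≥ 5`, every strategyproof, anonymous,
neutral SDS that is `α`-Condorcet-consistent and `β`-ex post efficient with
`β = (m-2)/(m-1)·α` is a convex combination of the uniform random dictatorship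
and the randomized Copeland rule. -/
theorem mixture_of_uniformRD_and_randCopeland (n m : ℕ) (hm : 4 ≤ m) (hn : 5 ≤ n)
    (α : ℝ) (F : Profile n m → Fin m → ℝ) (hF : IsSDS F) (hsp : Strategyproof F)
    (han : Anonymous F) (hneu : Neutral F)
    (hcc : CondorcetConsistent F α)
    (heff : ExPostEff F (((m : ℝ) - 2) / ((m : ℝ) - 1) * α)) :
    ∃ lam : ℝ, 0 ≤ lam ∧ lam ≤ 1 ∧
      ∀ R x, F R x = lam * uniformRD n m R x + (1 - lam) * randCopeland n m R x :=
  mixture_of_uniformRD_and_randCopeland_general n m hm (by omega) (by omega) α F hF hsp han hneu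
    hcc heff
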